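/- Let Ω ⊆ ℝ^d be a bounded open convex set and f : Ω → [0,∞) continuous. A function u : Ω → ℝ is a viscosity solution of the Bellman equation H(D²u, f) = 0 in Ω (i.e. u is upper semicontinuous and for every φ ∈ C²(Ω) such that u − φ attains a local maximum at x ∈ Ω one has H(D²φ(x), f(x)) ≤ 0, and u is lower semicontinuous and for every φ ∈ C²(Ω) such that u − φ attains a local minimum at x ∈ Ω one has H(D²φ(x), f(x)) ≥ 0) if and only if u is convex on Ω and is a viscosity solution of the Monge–Ampère equation M(D²u, f) = 0 on the set of convex functions (i.e. for every convex φ ∈ C²(Ω) such that u − φ attains a local maximum (resp. minimum) at x ∈ Ω one has M(D²φ(x), f(x)) ≤ 0 (resp. ≥ 0)). -/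

import Mathlib

open Matrix Set

/-- The set 𝐒₁ of positive semidefinite symmetric d×d real matrices with unit trace. -/
def S1set (d : ℕ) : Set (Matrix (Fin d) (Fin d) ℝ) :=
  {B | B.PosSemidef ∧ B.trace = 1}

/-- The value −B:A + f·(det B)^(1/d) appearing under the supremum of the Bellman operator. -/
noncomputable def bval (d : ℕ) (A B : Matrix (Fin d) (Fin d) ℝ) (f : ℝ) : ℝ :=
  -((B * A).trace) + f * B.det ^ ((1 : ℝ) / d)

/-- The Bellman operator H(A,f) = sup_{B ∈ 𝐒₁} (−B:A + f·(det B)^(1/d)). -/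
noncomputable def bellman (d : ℕ) (A : Matrix (Fin d) (Fin d) ℝ) (f : ℝ) : ℝ :=
  sSup ((fun B => bval d A B f) '' S1set d)

/-- The Monge–Ampère operator M(A,f) = (f/d)^d − det A. -/
noncomputable def MAop (d : ℕ) (A : Matrix (Fin d) (Fin d) ℝ) (f : ℝ) : ℝ :=
  (f / d) ^ d - A.det

/-- The Hessian matrix D²φ(x) of φ : ℝ^d → ℝ at x. -/
noncomputable def hessianM (d : ℕ) (φ : (Fin d → ℝ) → ℝ) (x : Fin d → ℝ) :
    Matrix (Fin d) (Fin d) ℝ :=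
  fun i j => iteratedFDeriv ℝ 2 φ x ![Pi.single i 1, Pi.single j 1]

/-!
By AM–GM, `tr (B A) ≥ d (det A)^(1/d) (det B)^(1/d)` for positive semidefinite `A` and `B`, with
equality at `B = A⁻¹ / tr A⁻¹` when `A` is positive definite, while rank-one matrices `B` turn
`H(A, f) ≤ 0` into positive semidefiniteness of `A`. Hence `H(A, f) ≤ 0` means that `A` is positive
semidefinite with `M(A, f) ≤ 0`, and `H(A, f) < 0` that `A` is positive definite with `M(A, f) < 0`.
Since `H(A + ε I, f) = H(A, f) - ε`, an arbitrary test function may be replaced by its second order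
Taylor polynomial with Hessian perturbed by `± ε I`, and this polynomial is convex exactly in the
cases that matter. Finally, an upper semicontinuous function all of whose test functions from above
have positive semidefinite Hessians is convex: if it rose above one of its chords, a function
strictly concave along that chord would touch it from above.
-/

open Filter Topology

section MatrixInequalities

lemma isClosed_setOf_posSemidef {n : Type*} [Finite n] :
    IsClosed {A : Matrix n n ℝ | A.PosSemidef} := by
  cases nonempty_fintype n
  simp only [Matrix.posSemidef_iff_dotProduct_mulVec, Set.ofPred_and, Set.ofPred_forall]
  exact (isClosed_eq (by fun_prop) (by fun_prop)).inter
    (isClosed_iInter fun v => isClosed_le (by fun_prop) (by fun_prop))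

variable {n : Type*} [Fintype n] {A B : Matrix n n ℝ}

lemma abs_apply_le_trace_of_posSemidef (hA : A.PosSemidef) (i j : n) : |A i j| ≤ A.trace := by
  classical
  have hdiag (k : n) : A k k ≤ A.trace :=
    Finset.single_le_sum (f := fun k => A k k) (fun _ _ => hA.diag_nonneg) (Finset.mem_univ k)
  have hsymm : A j i = A i j := by simpa using hA.1.apply i j
  have hadd : 0 ≤ A i i + A i j + (A i j + A j j) := by
    have h := hA.dotProduct_mulVec_nonneg (Pi.single i 1 + Pi.single j 1)
    simpa [Matrix.mulVec_add, hsymm] using h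
  have hsub : A i j - A j j ≤ A i i - A i j := by
    have h := hA.dotProduct_mulVec_nonneg (Pi.single i 1 - Pi.single j 1)
    simpa [Matrix.mulVec_sub, hsymm] using h
  rw [abs_le]
  constructor <;> linarith [hdiag i, hdiag j]

lemma eq_of_forall_dotProduct_mulVec_self_eq (hA : A.IsHermitian) (hB : B.IsHermitian)
    (h : ∀ v, v ⬝ᵥ A *ᵥ v = v ⬝ᵥ B *ᵥ v) : A = B := by
  classical
  ext i j
  have hA_symm : A j i = A i j := by simpa using hA.apply i j
  have hB_symm : B j i = B i j := by simpa using hB.apply i j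
  have hdiag (k : n) : A k k = B k k := by simpa using h (Pi.single k 1)
  have hsum : A i i + A i j + (A i j + A j j) = B i i + B i j + (B i j + B j j) := by
    have h_add := h (Pi.single i 1 + Pi.single j 1)
    simpa [Matrix.mulVec_add, hA_symm, hB_symm] using h_add
  linarith [hdiag i, hdiag j]

open scoped MatrixOrder in
lemma trace_mul_pos_of_posDef (hA : A.PosDef) (hB : B.PosSemidef) (hB0 : B ≠ 0) :
    0 < (B * A).trace := by
  classical
  obtain ⟨C, hC, rfl⟩ := CStarAlgebra.isStrictlyPositive_iff_eq_star_mul_self.mp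
    hA.isStrictlyPositive
  have hCBC : (C * B * Cᴴ).PosSemidef := hB.mul_mul_conjTranspose_same C
  have htrace : (B * (Cᴴ * C)).trace = (C * B * Cᴴ).trace := by
    rw [← Matrix.mul_assoc, Matrix.trace_mul_comm, Matrix.mul_assoc]
  have hne : C * B * Cᴴ ≠ 0 := by
    rwa [Ne, ← Matrix.star_eq_conjTranspose, hC.star.mul_left_eq_zero, hC.mul_right_eq_zero]
  exact htrace ▸ hCBC.trace_nonneg.lt_of_ne' (hCBC.trace_eq_zero_iff.not.mpr hne)

variable [DecidableEq n]

lemma card_mul_det_rpow_le_trace (hA : A.PosSemidef) :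
    Fintype.card n * A.det ^ ((1 : ℝ) / Fintype.card n) ≤ A.trace := by
  cases isEmpty_or_nonempty n
  · simp
  have hcard : (0 : ℝ) < Fintype.card n := by exact_mod_cast Fintype.card_pos
  have hdet : A.det = ∏ i, hA.1.eigenvalues i := by simpa using hA.1.det_eq_prod_eigenvalues
  have htrace : A.trace = ∑ i, hA.1.eigenvalues i := by simpa using hA.1.trace_eq_sum_eigenvalues
  have amgm := Real.geom_mean_le_arith_mean Finset.univ (fun _ : n => (1 : ℝ)) hA.1.eigenvalues
    (fun _ _ => zero_le_one) (by simpa using hcard) (fun i _ => hA.eigenvalues_nonneg i)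
  simp only [Real.rpow_one, one_mul, Finset.sum_const, Finset.card_univ, nsmul_eq_mul, mul_one,
    ← hdet, ← htrace] at amgm
  rwa [one_div, ← le_div_iff₀' hcard]

open scoped MatrixOrder in
lemma card_mul_det_rpow_mul_det_rpow_le_trace_mul (hA : A.PosSemidef) (hB : B.PosSemidef) :
    Fintype.card n * (A.det ^ ((1 : ℝ) / Fintype.card n) * B.det ^ ((1 : ℝ) / Fintype.card n)) ≤
      (B * A).trace := by
  have hA_det := hA.det_nonneg
  obtain ⟨C, rfl⟩ : ∃ C : Matrix n n ℝ, A = Cᴴ * C :=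
    CStarAlgebra.nonneg_iff_eq_star_mul_self.mp hA.nonneg
  have htrace : (B * (Cᴴ * C)).trace = (C * B * Cᴴ).trace := by
    rw [← Matrix.mul_assoc, Matrix.trace_mul_comm, Matrix.mul_assoc]
  have hdet : (Cᴴ * C).det * B.det = (C * B * Cᴴ).det := by
    simp only [Matrix.det_mul]
    ring
  rw [← Real.mul_rpow hA_det hB.det_nonneg, htrace, hdet]
  exact card_mul_det_rpow_le_trace (hB.mul_mul_conjTranspose_same C)

end MatrixInequalities

section BellmanOperator

variable {d : ℕ} {A B : Matrix (Fin d) (Fin d) ℝ} {f : ℝ}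

lemma isCompact_S1set : IsCompact (S1set d) := by
  refine .of_isClosed_subset
    (isCompact_univ_pi fun _ => isCompact_univ_pi fun _ => isCompact_Icc (a := (-1 : ℝ)) (b := 1))
    (isClosed_setOf_posSemidef.inter (isClosed_eq (by fun_prop) continuous_const)) ?_
  rintro B ⟨hB, htrace⟩ i - j -
  exact abs_le.mp (htrace ▸ abs_apply_le_trace_of_posSemidef hB i j)

lemma continuous_bval : Continuous fun B => bval d A B f := by
  unfold bval
  exact (by fun_prop : Continuous fun B : Matrix (Fin d) (Fin d) ℝ => -(B * A).trace).add
    (continuous_const.mul (continuous_id.matrix_det.rpow_const fun _ => .inr (by positivity)))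

lemma bval_le_bellman (hB : B ∈ S1set d) : bval d A B f ≤ bellman d A f :=
  le_csSup (isCompact_S1set.image continuous_bval).bddAbove ⟨B, hB, rfl⟩

lemma inv_smul_vecMulVec_mem_S1set {v : Fin d → ℝ} (hv : v ≠ 0) :
    (v ⬝ᵥ v)⁻¹ • Matrix.vecMulVec v v ∈ S1set d := by
  have hvv : 0 < v ⬝ᵥ v := by simpa using Matrix.dotProduct_star_self_pos_iff.mpr hv
  have hpsd : (Matrix.vecMulVec v v).PosSemidef := by
    simpa using Matrix.posSemidef_vecMulVec_self_star v
  refine ⟨hpsd.smul (by positivity), ?_⟩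
  rw [Matrix.trace_smul, Matrix.trace_vecMulVec, smul_eq_mul, inv_mul_cancel₀ hvv.ne']

lemma posSemidef_of_bellman_nonpos (hA : A.IsHermitian) (hf : 0 ≤ f) (h : bellman d A f ≤ 0) :
    A.PosSemidef := by
  refine .of_dotProduct_mulVec_nonneg hA fun v => ?_
  rcases eq_or_ne v 0 with rfl | hv
  · simp
  have hvv : 0 < v ⬝ᵥ v := by simpa using Matrix.dotProduct_star_self_pos_iff.mpr hv
  have hmem := inv_smul_vecMulVec_mem_S1set hv
  have hdet := mul_nonneg hf (Real.rpow_nonneg hmem.1.det_nonneg ((1 : ℝ) / d))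
  have hbval := (bval_le_bellman (A := A) (f := f) hmem).trans h
  have htrace : ((v ⬝ᵥ v)⁻¹ • Matrix.vecMulVec v v * A).trace
      = (v ⬝ᵥ v)⁻¹ * (v ⬝ᵥ A *ᵥ v) := by
    rw [Matrix.smul_mul, Matrix.trace_smul, Matrix.trace_mul_comm, Matrix.mul_vecMulVec,
      Matrix.trace_vecMulVec, dotProduct_comm (A *ᵥ v), smul_eq_mul]
  rw [bval, htrace] at hbval
  simpa using (mul_nonneg_iff_of_pos_left (inv_pos.mpr hvv)).mp (by linarith)

variable [NeZero d]

lemma exists_bellman_eq_bval (A : Matrix (Fin d) (Fin d) ℝ) (f : ℝ) :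
    ∃ B ∈ S1set d, bellman d A f = bval d A B f :=
  isCompact_S1set.exists_sSup_image_eq ⟨_, inv_smul_vecMulVec_mem_S1set one_ne_zero⟩
    continuous_bval.continuousOn

lemma bellman_add_smul_one (A : Matrix (Fin d) (Fin d) ℝ) (f ε : ℝ) :
    bellman d (A + ε • 1) f = bellman d A f - ε := by
  have hshift {B} (hB : B ∈ S1set d) : bval d (A + ε • 1) B f = bval d A B f - ε := by
    simp only [bval, Matrix.mul_add, Matrix.mul_smul, Matrix.trace_add,
      Matrix.trace_smul, hB.2, smul_eq_mul, mul_one]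
    ring
  apply le_antisymm
  · obtain ⟨B, hB, hBeq⟩ := exists_bellman_eq_bval (A + ε • 1) f
    rw [hBeq, hshift hB]
    gcongr
    exact bval_le_bellman hB
  · obtain ⟨B, hB, hBeq⟩ := exists_bellman_eq_bval A f
    rw [hBeq, ← hshift hB]
    exact bval_le_bellman hB

lemma MAop_nonpos_iff (hA : 0 ≤ A.det) (hf : 0 ≤ f) :
    MAop d A f ≤ 0 ↔ f ≤ d * A.det ^ ((1 : ℝ) / d) := by
  have hd : (0 : ℝ) < d := by exact_mod_cast NeZero.pos d
  rw [MAop, sub_nonpos, ← div_le_iff₀' hd, one_div,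
    Real.le_rpow_inv_iff_of_pos (by positivity) hA hd, Real.rpow_natCast]

lemma MAop_neg_iff (hA : 0 ≤ A.det) (hf : 0 ≤ f) :
    MAop d A f < 0 ↔ f < d * A.det ^ ((1 : ℝ) / d) := by
  have hd : (0 : ℝ) < d := by exact_mod_cast NeZero.pos d
  rw [MAop, sub_neg, ← div_lt_iff₀' hd, one_div,
    Real.lt_rpow_inv_iff_of_pos (by positivity) hA hd, Real.rpow_natCast]

-- The maximiser in the AM-GM inequality is `B = A⁻¹ / tr A⁻¹`.
lemma inv_trace_inv_mul_le_bellman (hA : A.PosDef) :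
    (A⁻¹.trace)⁻¹ * (f / A.det ^ ((1 : ℝ) / d) - d) ≤ bellman d A f := by
  have htrace : 0 < A⁻¹.trace := hA.inv.trace_pos
  have hdet := hA.det_pos
  have hmem : (A⁻¹.trace)⁻¹ • A⁻¹ ∈ S1set d :=
    ⟨hA.inv.posSemidef.smul (by positivity), by
      rw [Matrix.trace_smul, smul_eq_mul, inv_mul_cancel₀ htrace.ne']⟩
  have hinv : A⁻¹ * A = 1 := Matrix.nonsing_inv_mul _ (isUnit_iff_ne_zero.mpr hdet.ne')
  have hroot : ((A⁻¹.trace)⁻¹ ^ d) ^ ((1 : ℝ) / d) = (A⁻¹.trace)⁻¹ := by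
    rw [one_div, Real.pow_rpow_inv_natCast (by positivity) (NeZero.ne d)]
  refine le_of_eq_of_le ?_ (bval_le_bellman hmem)
  rw [bval, Matrix.smul_mul, hinv, Matrix.trace_smul, Matrix.trace_one, Matrix.det_smul,
    Real.mul_rpow (by positivity) hA.inv.det_pos.le, Fintype.card_fin, hroot,
    Matrix.det_nonsing_inv, Ring.inverse_eq_inv', Real.inv_rpow hdet.le, smul_eq_mul]
  ring

lemma MAop_nonpos_of_bellman_nonpos_of_posDef (hA : A.PosDef) (hf : 0 ≤ f)
    (h : bellman d A f ≤ 0) : MAop d A f ≤ 0 := by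
  have hroot : 0 < A.det ^ ((1 : ℝ) / d) := Real.rpow_pos_of_pos hA.det_pos _
  have hle := nonpos_of_mul_nonpos_right ((inv_trace_inv_mul_le_bellman hA).trans h)
    (inv_pos.mpr hA.inv.trace_pos)
  rwa [sub_nonpos, div_le_iff₀ hroot, ← MAop_nonpos_iff hA.det_pos.le hf] at hle

lemma MAop_neg_of_bellman_neg_of_posDef (hA : A.PosDef) (hf : 0 ≤ f)
    (h : bellman d A f < 0) : MAop d A f < 0 := by
  have hroot : 0 < A.det ^ ((1 : ℝ) / d) := Real.rpow_pos_of_pos hA.det_pos _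
  have hlt := neg_of_mul_neg_right ((inv_trace_inv_mul_le_bellman hA).trans_lt h)
    (inv_nonneg.mpr hA.inv.trace_pos.le)
  rwa [sub_neg, div_lt_iff₀ hroot, ← MAop_neg_iff hA.det_pos.le hf] at hlt

lemma MAop_nonpos_of_bellman_nonpos (hA : A.IsHermitian) (hf : 0 ≤ f) (h : bellman d A f ≤ 0) :
    MAop d A f ≤ 0 := by
  have hpsd := posSemidef_of_bellman_nonpos hA hf h
  have hshift : ∀ ε > (0 : ℝ), MAop d (A + ε • 1) f ≤ 0 := fun ε hε =>
    MAop_nonpos_of_bellman_nonpos_of_posDef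
      (.posSemidef_add hpsd (Matrix.PosDef.one.smul hε)) hf
      (by rw [bellman_add_smul_one]; linarith)
  have hcont : Continuous fun ε : ℝ => MAop d (A + ε • 1) f := by
    unfold MAop
    fun_prop
  have hlim : Tendsto (fun ε : ℝ => MAop d (A + ε • 1) f) (𝓝[>] 0) (𝓝 (MAop d A f)) := by
    simpa using (hcont.tendsto 0).mono_left (nhdsWithin_le_nhds (s := Ioi 0))
  exact le_of_tendsto hlim (eventually_mem_nhdsWithin.mono hshift)

lemma bellman_nonpos_iff (hA : A.IsHermitian) (hf : 0 ≤ f) :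
    bellman d A f ≤ 0 ↔ A.PosSemidef ∧ MAop d A f ≤ 0 := by
  refine ⟨fun h => ⟨posSemidef_of_bellman_nonpos hA hf h, MAop_nonpos_of_bellman_nonpos hA hf h⟩,
    fun ⟨hpsd, hMA⟩ => ?_⟩
  obtain ⟨B, hB, hBeq⟩ := exists_bellman_eq_bval A f
  have amgm := card_mul_det_rpow_mul_det_rpow_le_trace_mul hpsd hB.1
  rw [Fintype.card_fin, ← mul_assoc] at amgm
  have hfB := mul_le_mul_of_nonneg_right ((MAop_nonpos_iff hpsd.det_nonneg hf).mp hMA)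
    (Real.rpow_nonneg hB.1.det_nonneg ((1 : ℝ) / d))
  rw [hBeq, bval]
  linarith

lemma posDef_of_bellman_neg (hA : A.IsHermitian) (hf : 0 ≤ f) (h : bellman d A f < 0) :
    A.PosDef := by
  set η := bellman d A f with hη
  have hherm : (A + η • 1).IsHermitian :=
    hA.add (Matrix.isHermitian_one.smul (IsSelfAdjoint.all η))
  have hpsd := posSemidef_of_bellman_nonpos hherm hf (by rw [bellman_add_smul_one, ← hη, sub_self])
  simpa using Matrix.PosDef.posSemidef_add hpsd (Matrix.PosDef.one.smul (neg_pos.mpr h))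

lemma bellman_neg_iff (hA : A.IsHermitian) (hf : 0 ≤ f) :
    bellman d A f < 0 ↔ A.PosDef ∧ MAop d A f < 0 := by
  refine ⟨fun h => ?_, fun ⟨hpd, hMA⟩ => ?_⟩
  · have hpd := posDef_of_bellman_neg hA hf h
    exact ⟨hpd, MAop_neg_of_bellman_neg_of_posDef hpd hf h⟩
  obtain ⟨B, hB, hBeq⟩ := exists_bellman_eq_bval A f
  have hB0 : B ≠ 0 := by
    rintro rfl
    simpa using hB.2
  have htrace := trace_mul_pos_of_posDef hpd hB.1 hB0
  have amgm := card_mul_det_rpow_mul_det_rpow_le_trace_mul hpd.posSemidef hB.1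
  rw [Fintype.card_fin, ← mul_assoc] at amgm
  have hroot := Real.rpow_nonneg hB.1.det_nonneg ((1 : ℝ) / d)
  have hfA := (MAop_neg_iff hpd.det_pos.le hf).mp hMA
  rw [hBeq, bval]
  rcases hroot.eq_or_lt with hzero | hpos
  · rw [← hzero]
    linarith
  · linarith [mul_lt_mul_of_pos_right hfA hpos]

end BellmanOperator

section SecondOrderCalculus

variable {E : Type*} [NormedAddCommGroup E] [NormedSpace ℝ E] {φ : E → ℝ} {x : E}

lemma isLittleO_taylor_two (hφ : ContDiffAt ℝ 2 φ x) :
    (fun y => φ y - φ x - fderiv ℝ φ x (y - x) - 1 / 2 * fderiv ℝ (fderiv ℝ φ) x (y - x) (y - x))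
      =o[𝓝 x] fun y => ‖y - x‖ ^ 2 := by
  set D := fderiv ℝ (fderiv ℝ φ) x
  have hsymm : IsSymmSndFDerivAt ℝ φ x := hφ.isSymmSndFDerivAt (by simp)
  obtain ⟨r, hr, hball⟩ := Metric.eventually_nhds_iff_ball.mp (hφ.eventually (by simp))
  have hderiv (y) (hy : y ∈ Metric.ball x r) : HasFDerivWithinAt
      (fun y => φ y - φ x - fderiv ℝ φ x (y - x) - 1 / 2 * D (y - x) (y - x))
      (fderiv ℝ φ y - fderiv ℝ φ x - D (y - x)) (Metric.ball x r) y := by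
    have hφy := ((hball y hy).differentiableAt (by simp)).hasFDerivAt
    have hsub : HasFDerivAt (fun y => y - x) (.id ℝ E) y := (hasFDerivAt_id y).sub_const x
    have hlin := (fderiv ℝ φ x).hasFDerivAt.comp y hsub
    have hquad := (D.hasFDerivAt.comp y hsub).clm_apply hsub
    refine ((((hφy.sub_const (φ x)).sub hlin).sub
      (hquad.const_mul (1 / 2))).congr_fderiv ?_).hasFDerivWithinAt
    ext w
    have hDsymm : D w (y - x) = D (y - x) w := hsymm w (y - x)
    simp only [one_div, Function.comp_apply, _root_.sub_apply, _root_.add_apply,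
      _root_.smul_apply, ContinuousLinearMap.comp_id, ContinuousLinearMap.flip_apply, hDsymm,
      smul_eq_mul]
    ring
  have hderiv_isLittleO : (fun y => fderiv ℝ φ y - fderiv ℝ φ x - D (y - x))
      =o[𝓝[Metric.ball x r] x] fun y => ‖y - x‖ ^ 1 := by
    have hdiff : DifferentiableAt ℝ (fderiv ℝ φ) x :=
      (hφ.fderiv_right (m := 1) (by norm_num)).differentiableAt (by simp)
    simpa only [pow_one] using (hdiff.hasFDerivAt.isLittleO.mono nhdsWithin_le_nhds).norm_right
  simpa [nhdsWithin_eq_nhds.mpr (Metric.ball_mem_nhds x hr)] using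
    (convex_ball x r).isLittleO_pow_succ (Metric.mem_ball_self hr) hderiv hderiv_isLittleO

lemma tendsto_add_smul_nhdsNE (x v : E) : Tendsto (fun t : ℝ => x + t • v) (𝓝[≠] 0) (𝓝 x) := by
  have hcont : Continuous fun t : ℝ => x + t • v := by fun_prop
  simpa using (hcont.tendsto 0).mono_left nhdsWithin_le_nhds

lemma isLittleO_taylor_two_add_smul (hφ : ContDiffAt ℝ 2 φ x) (v : E) :
    (fun t : ℝ => φ (x + t • v) - φ x - t * fderiv ℝ φ x v
      - 1 / 2 * (t ^ 2 * fderiv ℝ (fderiv ℝ φ) x v v)) =o[𝓝[≠] 0] fun t => t ^ 2 := by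
  have hnorm : (fun t : ℝ => ‖x + t • v - x‖ ^ 2) =O[𝓝[≠] 0] fun t => t ^ 2 :=
    .of_bound (‖v‖ ^ 2) (.of_forall fun t => by simp [norm_smul, mul_pow, mul_comm])
  refine (((isLittleO_taylor_two hφ).comp_tendsto
    (tendsto_add_smul_nhdsNE x v)).trans_isBigO hnorm).congr_left fun t => ?_
  simp only [Function.comp_apply, add_sub_cancel_left, map_smul, _root_.smul_apply, smul_eq_mul]
  ring

lemma tendsto_secondDifference (hφ : ContDiffAt ℝ 2 φ x) (v : E) :
    Tendsto (fun t : ℝ => (φ (x + t • v) + φ (x - t • v) - 2 * φ x) / t ^ 2) (𝓝[≠] 0)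
      (𝓝 (fderiv ℝ (fderiv ℝ φ) x v v)) := by
  have hlim := ((isLittleO_taylor_two_add_smul hφ v).add
    (isLittleO_taylor_two_add_smul hφ (-v))).tendsto_div_nhds_zero.add_const
      (fderiv ℝ (fderiv ℝ φ) x v v)
  rw [zero_add] at hlim
  refine hlim.congr' (eventually_mem_nhdsWithin.mono fun t (ht : t ≠ 0) => ?_)
  simp only [smul_neg, ← sub_eq_add_neg, map_neg, _root_.neg_apply, neg_neg]
  field_simp
  ring

variable {d : ℕ} {φ : (Fin d → ℝ) → ℝ} {x : Fin d → ℝ}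

lemma isHermitian_hessianM (hφ : ContDiffAt ℝ 2 φ x) : (hessianM d φ x).IsHermitian := by
  have hsymm : IsSymmSndFDerivAt ℝ φ x := hφ.isSymmSndFDerivAt (by simp)
  ext i j
  simpa [hessianM, iteratedFDeriv_two_apply] using hsymm (Pi.single j 1) (Pi.single i 1)

lemma dotProduct_hessianM_mulVec (φ : (Fin d → ℝ) → ℝ) (x v w : Fin d → ℝ) :
    v ⬝ᵥ hessianM d φ x *ᵥ w = fderiv ℝ (fderiv ℝ φ) x v w := by
  conv_rhs => rw [pi_eq_sum_univ' v, pi_eq_sum_univ' w]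
  simp only [map_sum, map_smul, _root_.sum_apply, _root_.smul_apply, smul_eq_mul, dotProduct,
    Matrix.mulVec, hessianM, iteratedFDeriv_two_apply, Finset.mul_sum, Matrix.cons_val_zero,
    Matrix.cons_val_one]
  rw [Finset.sum_comm]
  refine Finset.sum_congr rfl fun i _ => Finset.sum_congr rfl fun j _ => ?_
  ring

lemma dotProduct_hessianM_mulVec_eq_of_secondDifference_eq (hφ : ContDiffAt ℝ 2 φ x)
    {v : Fin d → ℝ} {c : ℝ} (h : ∀ t : ℝ, φ (x + t • v) + φ (x - t • v) - 2 * φ x = c * t ^ 2) :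
    v ⬝ᵥ hessianM d φ x *ᵥ v = c := by
  rw [dotProduct_hessianM_mulVec]
  refine tendsto_nhds_unique (tendsto_secondDifference hφ v) (tendsto_const_nhds.congr' ?_)
  refine eventually_mem_nhdsWithin.mono fun t (ht : t ≠ 0) => ?_
  dsimp only
  rw [h, mul_div_cancel_right₀ _ (pow_ne_zero 2 ht)]

lemma posSemidef_hessianM_of_isLocalMax_sub {Ω : Set (Fin d → ℝ)} {u : (Fin d → ℝ) → ℝ}
    (hu : ConvexOn ℝ Ω u) (hx : Ω ∈ 𝓝 x) (hφ : ContDiffAt ℝ 2 φ x)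
    (hmax : IsLocalMax (fun y => u y - φ y) x) : (hessianM d φ x).PosSemidef := by
  refine .of_dotProduct_mulVec_nonneg (isHermitian_hessianM hφ) fun v => ?_
  rw [star_trivial, dotProduct_hessianM_mulVec]
  refine ge_of_tendsto (tendsto_secondDifference hφ v) ?_
  have hplus := tendsto_add_smul_nhdsNE x v
  have hminus : Tendsto (fun t : ℝ => x - t • v) (𝓝[≠] 0) (𝓝 x) := by
    simpa [sub_eq_add_neg] using tendsto_add_smul_nhdsNE x (-v)
  filter_upwards [hplus hx, hminus hx, hplus.eventually hmax, hminus.eventually hmax]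
    with t hΩ₁ hΩ₂ hmax₁ hmax₂
  have hmid : (1 / 2 : ℝ) • (x + t • v) + (1 / 2 : ℝ) • (x - t • v) = x := by module
  have hconv := hu.2 hΩ₁ hΩ₂ one_half_pos.le one_half_pos.le (add_halves (1 : ℝ))
  rw [hmid, smul_eq_mul, smul_eq_mul] at hconv
  exact div_nonneg (by linarith) (sq_nonneg t)

end SecondOrderCalculus

section QuadraticTestFunctions

lemma norm_sq_le_dotProduct_self {ι : Type*} [Fintype ι] (v : ι → ℝ) : ‖v‖ ^ 2 ≤ v ⬝ᵥ v := by
  have hvv : 0 ≤ v ⬝ᵥ v := by simpa using dotProduct_self_star_nonneg v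
  rw [← Real.le_sqrt (norm_nonneg v) hvv, pi_norm_le_iff_of_nonneg (Real.sqrt_nonneg _)]
  intro i
  refine Real.le_sqrt_of_sq_le ?_
  rw [Real.norm_eq_abs, sq_abs, sq]
  exact Finset.single_le_sum (f := fun i => v i * v i) (fun i _ => mul_self_nonneg _)
    (Finset.mem_univ i)

/-- The quadratic polynomial `y ↦ a + L (y - x) + ½ (y - x) ⬝ A (y - x)`, with prescribed value,
gradient and, for symmetric `A`, Hessian at `x`; it serves as a test function. -/
noncomputable def quadraticFun {ι : Type*} [Fintype ι] (a : ℝ) (L : (ι → ℝ) →L[ℝ] ℝ)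
    (A : Matrix ι ι ℝ) (x y : ι → ℝ) : ℝ :=
  a + L (y - x) + 1 / 2 * ((y - x) ⬝ᵥ A *ᵥ (y - x))

section General

variable {ι : Type*} [Fintype ι] (a : ℝ) (L : (ι → ℝ) →L[ℝ] ℝ) (A : Matrix ι ι ℝ) (x : ι → ℝ)

lemma quadraticFun_self : quadraticFun a L A x x = a := by simp [quadraticFun]

lemma contDiff_quadraticFun {k : WithTop ℕ∞} : ContDiff ℝ k (quadraticFun a L A x) := by
  unfold quadraticFun
  simp only [dotProduct, Matrix.mulVec]
  fun_prop

lemma quadraticFun_add_smul_one [DecidableEq ι] (ε : ℝ) (y : ι → ℝ) :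
    quadraticFun a L (A + ε • 1) x y =
      quadraticFun a L A x y + 1 / 2 * (ε * ((y - x) ⬝ᵥ (y - x))) := by
  simp only [quadraticFun, Matrix.add_mulVec, Matrix.smul_mulVec, Matrix.one_mulVec,
    dotProduct_add, dotProduct_smul, smul_eq_mul]
  ring

variable {A}

lemma convexOn_quadraticFun (hA : A.PosSemidef) {s : Set (ι → ℝ)} (hs : Convex ℝ s) :
    ConvexOn ℝ s (quadraticFun a L A x) := by
  refine ⟨hs, fun y _ z _ α β hα hβ hαβ => ?_⟩
  obtain rfl : β = 1 - α := by linarith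
  have hdiff := hA.dotProduct_mulVec_nonneg ((y - x) - (z - x))
  have hcomb : α • y + (1 - α) • z - x = α • (y - x) + (1 - α) • (z - x) := by module
  rw [quadraticFun, quadraticFun, quadraticFun, hcomb]
  simp only [star_trivial, Matrix.mulVec_add, Matrix.mulVec_sub, Matrix.mulVec_smul, dotProduct_add,
    add_dotProduct, sub_dotProduct, dotProduct_sub, smul_dotProduct, dotProduct_smul, smul_eq_mul,
    map_add, map_smul] at hdiff ⊢
  linarith [mul_nonneg (mul_nonneg hα hβ) hdiff]

end General

variable {d : ℕ} {φ : (Fin d → ℝ) → ℝ} {x : Fin d → ℝ}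

lemma hessianM_quadraticFun (a : ℝ) (L : (Fin d → ℝ) →L[ℝ] ℝ) {A : Matrix (Fin d) (Fin d) ℝ}
    (hA : A.IsHermitian) (x : Fin d → ℝ) : hessianM d (quadraticFun a L A x) x = A := by
  have hsmooth : ContDiffAt ℝ 2 (quadraticFun a L A x) x :=
    (contDiff_quadraticFun a L A x).contDiffAt
  refine eq_of_forall_dotProduct_mulVec_self_eq (isHermitian_hessianM hsmooth) hA fun v => ?_
  refine dotProduct_hessianM_mulVec_eq_of_secondDifference_eq hsmooth fun t => ?_
  simp only [quadraticFun, add_sub_cancel_left, sub_sub_cancel_left, sub_self, map_neg, map_smul,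
    map_zero, Matrix.mulVec_neg, Matrix.mulVec_smul, Matrix.mulVec_zero, dotProduct_neg,
    neg_dotProduct, dotProduct_smul, smul_dotProduct, dotProduct_zero, smul_eq_mul]
  ring

lemma eventually_abs_sub_quadraticFun_le (hφ : ContDiffAt ℝ 2 φ x) {ε : ℝ} (hε : 0 < ε) :
    ∀ᶠ y in 𝓝 x, |φ y - quadraticFun (φ x) (fderiv ℝ φ x) (hessianM d φ x) x y| ≤
      1 / 2 * (ε * ((y - x) ⬝ᵥ (y - x))) := by
  filter_upwards [(isLittleO_taylor_two hφ).def (half_pos hε)] with y hy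
  rw [← dotProduct_hessianM_mulVec, Real.norm_eq_abs, norm_pow, norm_norm] at hy
  rw [quadraticFun, ← sub_sub, ← sub_sub]
  linarith [mul_le_mul_of_nonneg_left (norm_sq_le_dotProduct_self (y - x)) hε.le]

lemma eventually_le_quadraticFun_add_smul_one (hφ : ContDiffAt ℝ 2 φ x) {ε : ℝ} (hε : 0 < ε) :
    ∀ᶠ y in 𝓝 x, φ y ≤ quadraticFun (φ x) (fderiv ℝ φ x) (hessianM d φ x + ε • 1) x y := by
  filter_upwards [eventually_abs_sub_quadraticFun_le hφ hε] with y hy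
  rw [quadraticFun_add_smul_one]
  linarith [(abs_le.mp hy).2]

lemma eventually_quadraticFun_sub_smul_one_le (hφ : ContDiffAt ℝ 2 φ x) {ε : ℝ} (hε : 0 < ε) :
    ∀ᶠ y in 𝓝 x, quadraticFun (φ x) (fderiv ℝ φ x) (hessianM d φ x + (-ε) • 1) x y ≤ φ y := by
  filter_upwards [eventually_abs_sub_quadraticFun_le hφ hε] with y hy
  rw [quadraticFun_add_smul_one]
  linarith [(abs_le.mp hy).1]

end QuadraticTestFunctions

section ConvexityOfSubsolutions

lemma upperSemicontinuousOn_sub {X : Type*} [TopologicalSpace X] {s : Set X} {g h : X → ℝ}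
    (hg : UpperSemicontinuousOn g s) (hh : ContinuousOn h s) :
    UpperSemicontinuousOn (fun p => g p - h p) s := by
  simp only [sub_eq_add_neg]
  exact hg.add (g := fun p => -h p) hh.neg.upperSemicontinuousOn

lemma exists_isMaxOn_sub_mul_of_isClosed {X : Type*} [TopologicalSpace X] {K T : Set X}
    {g Q : X → ℝ} {z : X} (hK : IsCompact K) (hT : IsClosed T) (hg : UpperSemicontinuousOn g K)
    (hQ : ContinuousOn Q K) (hQ_nonneg : ∀ p ∈ K, 0 ≤ Q p) (hz : z ∈ K) (hQz : Q z = 0)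
    (hlt : ∀ p ∈ K ∩ T, Q p = 0 → g p < g z) :
    ∃ N : ℝ, ∃ p ∈ K \ T, IsMaxOn (fun p => g p - N * Q p) K p := by
  have hcompact : IsCompact (T ∩ (K ∩ g ⁻¹' Ici (g z))) :=
    (hg.isCompact_inter_preimage_Ici hK _).inter_left hT
  obtain ⟨q, hq_pos, hq⟩ : ∃ q > 0, ∀ p ∈ T ∩ (K ∩ g ⁻¹' Ici (g z)), q ≤ Q p :=
    hcompact.exists_forall_le' (hQ.mono (inter_subset_right.trans inter_subset_left))
      fun p ⟨hpT, hpK, hgp⟩ => (hQ_nonneg p hpK).lt_of_ne' fun h0 =>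
        (hlt p ⟨hpK, hpT⟩ h0).not_ge hgp
  obtain ⟨M, hM⟩ := hg.bddAbove_of_isCompact hK
  have hgM (p) (hp : p ∈ K) : g p ≤ M := hM (mem_image_of_mem g hp)
  set N := (M - g z + 1) / q
  have hN_nonneg : 0 ≤ N := div_nonneg (by linarith [hgM z hz]) hq_pos.le
  have hNq : N * q = M - g z + 1 := div_mul_cancel₀ _ hq_pos.ne'
  obtain ⟨p, hpK, hmax⟩ :=
    (upperSemicontinuousOn_sub hg ((continuousOn_const (c := N)).mul hQ)).exists_isMaxOn ⟨z, hz⟩ hK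
  have hzp : g z ≤ g p - N * Q p := by simpa [hQz] using hmax hz
  have hNQ := mul_nonneg hN_nonneg (hQ_nonneg p hpK)
  refine ⟨N, p, ⟨hpK, fun hpT => ?_⟩, hmax⟩
  have hqp : q ≤ Q p := hq p ⟨hpT, hpK, by simp only [mem_preimage, mem_Ici]; linarith⟩
  linarith [mul_le_mul_of_nonneg_left hqp hN_nonneg, hgM p hpK]

lemma exists_isCompact_openSegment_subset_interior {E : Type*} [NormedAddCommGroup E]
    [NormedSpace ℝ E] [ProperSpace E] {Ω : Set E} {x y : E} (hΩ : IsOpen Ω)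
    (hseg : segment ℝ x y ⊆ Ω) (S : E →L[ℝ] ℝ) (hS : S x < S y) :
    ∃ K ⊆ Ω, IsCompact K ∧ segment ℝ x y ⊆ K ∧ openSegment ℝ x y ⊆ interior K ∧
      MapsTo S K (Icc (S x) (S y)) := by
  have hcompact : IsCompact (segment ℝ x y) := by
    rw [segment_eq_image_lineMap]
    exact isCompact_Icc.image AffineMap.lineMap_continuous
  obtain ⟨δ, hδ, hδΩ⟩ := hcompact.exists_cthickening_subset_open hΩ hseg
  have hS_segment : segment ℝ x y ⊆ S ⁻¹' Icc (S x) (S y) :=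
    ((convex_Icc (S x) (S y)).linear_preimage S.toLinearMap).segment_subset
      (left_mem_Icc.mpr hS.le) (right_mem_Icc.mpr hS.le)
  have hS_openSegment : openSegment ℝ x y ⊆ S ⁻¹' Ioo (S x) (S y) := by
    rw [← openSegment_eq_Ioo hS, ← image_subset_iff]
    exact (image_openSegment ℝ S.toLinearMap.toAffineMap x y).subset
  refine ⟨Metric.cthickening δ (segment ℝ x y) ∩ S ⁻¹' Icc (S x) (S y),
    inter_subset_left.trans hδΩ, hcompact.cthickening.inter_right (isClosed_Icc.preimage S.cont),
    subset_inter (Metric.self_subset_cthickening _) hS_segment, ?_, inter_subset_right⟩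
  refine Subset.trans ?_ (interior_maximal
    (inter_subset_inter (Metric.thickening_subset_cthickening δ _)
      (preimage_mono Ioo_subset_Icc_self))
    (Metric.isOpen_thickening.inter (isOpen_Ioo.preimage S.cont)))
  exact subset_inter ((openSegment_subset_segment ℝ x y).trans (Metric.self_subset_thickening hδ _))
    hS_openSegment

lemma mem_segment_of_mem_line {E : Type*} [AddCommGroup E] [Module ℝ E] {x y p : E} {S : E →ₗ[ℝ] ℝ}
    (hS : S x < S y) (hp : p ∈ line[ℝ, x, y]) (hSp : S p ∈ Icc (S x) (S y)) :
    p ∈ segment ℝ x y := by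
  obtain ⟨t, rfl⟩ := mem_affineSpan_pair_iff_exists_lineMap_eq.mp hp
  rw [segment_eq_image_lineMap]
  refine mem_image_of_mem _ ?_
  have hSt : S (AffineMap.lineMap x y t) = S x + t * (S y - S x) := by
    simp [AffineMap.lineMap_apply, add_comm]
  rw [hSt, mem_Icc, le_add_iff_nonneg_right, ← le_sub_iff_add_le',
    mul_nonneg_iff_of_pos_right (sub_pos.mpr hS), mul_le_iff_le_one_left (sub_pos.mpr hS)] at hSp
  exact hSp

lemma exists_isLocalMax_sub_mul_of_lt_of_lt {E : Type*} [NormedAddCommGroup E] [NormedSpace ℝ E]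
    [ProperSpace E] {Ω : Set E} {w Q : E → ℝ} {x y z : E} (hΩ : IsOpen Ω)
    (hw : UpperSemicontinuousOn w Ω) (hseg : segment ℝ x y ⊆ Ω) (hz : z ∈ segment ℝ x y)
    (hx : w x < w z) (hy : w y < w z) (hQ : Continuous Q) (hQ_nonneg : ∀ p, 0 ≤ Q p)
    (hQ_line : ∀ p, Q p = 0 ↔ p ∈ line[ℝ, x, y]) :
    ∃ N : ℝ, ∃ p ∈ Ω, IsLocalMax (fun p => w p - N * Q p) p := by
  have hxy : y - x ≠ 0 := by
    rw [sub_ne_zero]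
    rintro rfl
    rw [segment_same, mem_singleton_iff] at hz
    exact hx.ne (congrArg w hz.symm)
  obtain ⟨S, hS⟩ : ∃ S : E →L[ℝ] ℝ, S (y - x) = 1 := SeparatingDual.exists_eq_one hxy
  have hSxy : S x < S y := by rw [← sub_pos, ← map_sub, hS]; exact one_pos
  obtain ⟨K, hKΩ, hK, hsegK, hopenK, hSK⟩ :=
    exists_isCompact_openSegment_subset_interior hΩ hseg S hSxy
  have hQz : Q z = 0 := by
    rw [hQ_line]
    exact (mem_segment_iff_wbtw.mp hz).mem_affineSpan
  have hlt (p) (hp : p ∈ K ∩ (interior K)ᶜ) (hQp : Q p = 0) : w p < w z := by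
    have hp_seg : p ∈ insert x (insert y (openSegment ℝ x y)) := by
      rw [insert_endpoints_openSegment]
      exact mem_segment_of_mem_line (S := S.toLinearMap) hSxy ((hQ_line p).mp hQp) (hSK hp.1)
    rcases hp_seg with rfl | rfl | hp_open
    exacts [hx, hy, absurd (hopenK hp_open) hp.2]
  obtain ⟨N, p, ⟨hpK, hp_interior⟩, hmax⟩ := exists_isMaxOn_sub_mul_of_isClosed hK
    isOpen_interior.isClosed_compl (hw.mono hKΩ) hQ.continuousOn (fun p _ => hQ_nonneg p)
    (hsegK hz) hQz hlt
  exact ⟨N, p, hKΩ hpK,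
    hmax.isLocalMax (mem_interior_iff_mem_nhds.mp (notMem_compl_iff.mp hp_interior))⟩

lemma exists_contDiff_eq_zero_iff_mem_line {ι : Type*} [Fintype ι] {x y : ι → ℝ} (hxy : y - x ≠ 0) :
    ∃ Q : (ι → ℝ) → ℝ, ContDiff ℝ 2 Q ∧ (∀ p, 0 ≤ Q p) ∧ (∀ p, Q p = 0 ↔ p ∈ line[ℝ, x, y]) ∧
      ∀ p (t : ℝ), Q (p + t • (y - x)) = Q p := by
  obtain ⟨S, hS⟩ : ∃ S : (ι → ℝ) →L[ℝ] ℝ, S (y - x) = 1 := SeparatingDual.exists_eq_one hxy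
  let R (p : ι → ℝ) : ι → ℝ := p - x - S (p - x) • (y - x)
  have hR_add (p) (t : ℝ) : R (p + t • (y - x)) = R p := by
    simp only [R, add_sub_right_comm, map_add, map_smul, hS, smul_eq_mul, mul_one]
    module
  refine ⟨fun p => R p ⬝ᵥ R p, ?_, fun p => by simpa using dotProduct_self_star_nonneg (R p),
    fun p => ?_, fun p t => by simp only [hR_add]⟩
  · simp only [dotProduct, R]
    fun_prop
  rw [dotProduct_self_eq_zero, mem_affineSpan_pair_iff_exists_lineMap_eq]
  constructor
  · exact fun h => ⟨S (p - x), by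
      rw [AffineMap.lineMap_apply, vsub_eq_sub, ← sub_eq_zero.mp h, vadd_eq_add, sub_add_cancel]⟩
  · rintro ⟨t, rfl⟩
    rw [AffineMap.lineMap_apply, vsub_eq_sub, vadd_eq_add, add_comm, hR_add]
    simp [R]

-- The test function is the chord of `u` minus a small multiple of the squared position along it,
-- plus a large multiple of a squared distance to the line through `x` and `y`.
lemma exists_isLocalMax_sub_of_chord_lt {ι : Type*} [Fintype ι] {Ω : Set (ι → ℝ)}
    {u : (ι → ℝ) → ℝ} (hΩ : IsOpen Ω) (hu : UpperSemicontinuousOn u Ω) {x y : ι → ℝ}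
    (hseg : segment ℝ x y ⊆ Ω) {a b : ℝ} (ha : 0 ≤ a) (hb : 0 ≤ b) (hab : a + b = 1)
    (hlt : a * u x + b * u y < u (a • x + b • y)) :
    ∃ φ : (ι → ℝ) → ℝ, ContDiff ℝ 2 φ ∧ ∃ p ∈ Ω, IsLocalMax (fun q => u q - φ q) p ∧
      ∃ v, ∃ c < 0, ∀ t : ℝ, φ (p + t • v) + φ (p - t • v) - 2 * φ p = c * t ^ 2 := by
  have hxy : y - x ≠ 0 := by
    rw [sub_ne_zero]
    rintro rfl
    rw [← add_smul, ← add_mul, hab, one_smul, one_mul] at hlt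
    exact lt_irrefl _ hlt
  obtain ⟨S, hS⟩ : ∃ S : (ι → ℝ) →L[ℝ] ℝ, S (y - x) = 1 := SeparatingDual.exists_eq_one hxy
  obtain ⟨Q, hQ, hQ_nonneg, hQ_line, hQ_add⟩ := exists_contDiff_eq_zero_iff_mem_line hxy
  obtain rfl : a = 1 - b := by linarith
  set z := (1 - b) • x + b • y
  have hSz : S (z - x) = b := by
    rw [show z - x = b • (y - x) by module, map_smul, hS, smul_eq_mul, mul_one]
  set gap := u z - ((1 - b) * u x + b * u y) with hgap
  let ψ (p : ι → ℝ) : ℝ := u x + S (p - x) * (u y - u x) - gap / 2 * S (p - x) ^ 2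
  have hψ : ContDiff ℝ 2 ψ := by fun_prop
  have hψx : u x - ψ x = 0 := by simp [ψ]
  have hψy : u y - ψ y = gap / 2 := by simp only [ψ, hS]; ring
  have hψz : u z - ψ z = gap + gap / 2 * b ^ 2 := by simp only [ψ, hSz, hgap]; ring
  have hpos : 0 ≤ gap / 2 * b ^ 2 := mul_nonneg (by linarith) (sq_nonneg b)
  obtain ⟨N, p, hp, hmax⟩ := exists_isLocalMax_sub_mul_of_lt_of_lt hΩ
    (upperSemicontinuousOn_sub hu hψ.continuous.continuousOn) hseg ⟨_, b, ha, hb, hab, rfl⟩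
    (by linarith) (by linarith) hQ.continuous hQ_nonneg hQ_line
  refine ⟨fun p => ψ p + N * Q p, hψ.add (contDiff_const.mul hQ), p, hp,
    by simpa only [← sub_sub] using hmax, y - x, -gap, by linarith, fun t => ?_⟩
  have hQ_sub : Q (p - t • (y - x)) = Q p := by rw [sub_eq_add_neg, ← neg_smul, hQ_add]
  simp only [ψ, add_sub_right_comm, sub_right_comm p, map_add, map_sub S (p - x), map_smul, hS,
    hQ_add, hQ_sub, smul_eq_mul]
  ring

lemma convexOn_of_forall_posSemidef_hessianM {d : ℕ} {Ω : Set (Fin d → ℝ)} {u : (Fin d → ℝ) → ℝ}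
    (hΩo : IsOpen Ω) (hΩc : Convex ℝ Ω) (hu : UpperSemicontinuousOn u Ω)
    (htest : ∀ φ : (Fin d → ℝ) → ℝ, ContDiff ℝ 2 φ → ∀ p ∈ Ω,
      IsLocalMax (fun q => u q - φ q) p → (hessianM d φ p).PosSemidef) : ConvexOn ℝ Ω u := by
  refine ⟨hΩc, fun x hx y hy a b ha hb hab => ?_⟩
  by_contra! hlt
  obtain ⟨φ, hφ, p, hp, hmax, v, c, hc, hdiff⟩ := exists_isLocalMax_sub_of_chord_lt hΩo hu
    (hΩc.segment_subset hx hy) ha hb hab hlt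
  have hvv := (htest φ hφ p hp hmax).dotProduct_mulVec_nonneg v
  rw [star_trivial,
    dotProduct_hessianM_mulVec_eq_of_secondDifference_eq hφ.contDiffAt hdiff] at hvv
  exact hvv.not_gt hc

end ConvexityOfSubsolutions

section ViscositySolutions

variable {d : ℕ} {Ω : Set (Fin d → ℝ)} {f u : (Fin d → ℝ) → ℝ}

/-- The test-function condition for viscosity subsolutions of the Bellman equation
`H(D²u, f) = 0` in `Ω`; semicontinuity of `u` is not included. -/
def IsBellmanSubsolution (Ω : Set (Fin d → ℝ)) (f u : (Fin d → ℝ) → ℝ) : Prop :=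
  ∀ φ : (Fin d → ℝ) → ℝ, ContDiffOn ℝ 2 φ Ω →
    ∀ x ∈ Ω, IsLocalMaxOn (fun y => u y - φ y) Ω x → bellman d (hessianM d φ x) (f x) ≤ 0

/-- The test-function condition for viscosity supersolutions of the Bellman equation
`H(D²u, f) = 0` in `Ω`; semicontinuity of `u` is not included. -/
def IsBellmanSupersolution (Ω : Set (Fin d → ℝ)) (f u : (Fin d → ℝ) → ℝ) : Prop :=
  ∀ φ : (Fin d → ℝ) → ℝ, ContDiffOn ℝ 2 φ Ω →
    ∀ x ∈ Ω, IsLocalMinOn (fun y => u y - φ y) Ω x → 0 ≤ bellman d (hessianM d φ x) (f x)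

/-- The viscosity subsolution condition for the Monge–Ampère equation `M(D²u, f) = 0` in `Ω`, in
which only convex test functions are admitted. -/
def IsMongeAmpereSubsolution (Ω : Set (Fin d → ℝ)) (f u : (Fin d → ℝ) → ℝ) : Prop :=
  ∀ φ : (Fin d → ℝ) → ℝ, ContDiffOn ℝ 2 φ Ω → ConvexOn ℝ Ω φ →
    ∀ x ∈ Ω, IsLocalMaxOn (fun y => u y - φ y) Ω x → MAop d (hessianM d φ x) (f x) ≤ 0

/-- The viscosity supersolution condition for the Monge–Ampère equation `M(D²u, f) = 0` in `Ω`, in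
which only convex test functions are admitted. -/
def IsMongeAmpereSupersolution (Ω : Set (Fin d → ℝ)) (f u : (Fin d → ℝ) → ℝ) : Prop :=
  ∀ φ : (Fin d → ℝ) → ℝ, ContDiffOn ℝ 2 φ Ω → ConvexOn ℝ Ω φ →
    ∀ x ∈ Ω, IsLocalMinOn (fun y => u y - φ y) Ω x → 0 ≤ MAop d (hessianM d φ x) (f x)

lemma convexOn_of_isBellmanSubsolution (hΩo : IsOpen Ω) (hΩc : Convex ℝ Ω)
    (hf0 : ∀ x ∈ Ω, 0 ≤ f x) (hu : UpperSemicontinuousOn u Ω) (hsub : IsBellmanSubsolution Ω f u) :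
    ConvexOn ℝ Ω u :=
  convexOn_of_forall_posSemidef_hessianM hΩo hΩc hu fun φ hφ p hp hmax =>
    posSemidef_of_bellman_nonpos (isHermitian_hessianM hφ.contDiffAt) (hf0 p hp)
      (hsub φ hφ.contDiffOn p hp (hmax.on Ω))

variable [NeZero d]

lemma isMongeAmpereSubsolution_of_isBellmanSubsolution (hΩo : IsOpen Ω)
    (hf0 : ∀ x ∈ Ω, 0 ≤ f x) (hsub : IsBellmanSubsolution Ω f u) :
    IsMongeAmpereSubsolution Ω f u :=
  fun φ hφ _ x hx hmax => MAop_nonpos_of_bellman_nonpos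
    (isHermitian_hessianM (hφ.contDiffAt (hΩo.mem_nhds hx))) (hf0 x hx) (hsub φ hφ x hx hmax)

lemma isBellmanSubsolution_of_isMongeAmpereSubsolution (hΩo : IsOpen Ω)
    (hf0 : ∀ x ∈ Ω, 0 ≤ f x) (hu : ConvexOn ℝ Ω u) (hsub : IsMongeAmpereSubsolution Ω f u) :
    IsBellmanSubsolution Ω f u := by
  intro φ hφ x hx hmaxOn
  have hφx : ContDiffAt ℝ 2 φ x := hφ.contDiffAt (hΩo.mem_nhds hx)
  have hmax : IsLocalMax (fun y => u y - φ y) x := hmaxOn.isLocalMax (hΩo.mem_nhds hx)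
  have hpsd := posSemidef_hessianM_of_isLocalMax_sub hu (hΩo.mem_nhds hx) hφx hmax
  refine le_of_forall_pos_le_add fun ε hε => ?_
  rw [zero_add, ← sub_nonpos, ← bellman_add_smul_one]
  set A := hessianM d φ x + ε • 1
  have hA : A.PosSemidef := hpsd.add (Matrix.PosSemidef.one.smul hε.le)
  have htouch :
      IsLocalMax (fun y => u y - quadraticFun (φ x) (fderiv ℝ φ x) A x y) x := by
    filter_upwards [hmax, eventually_le_quadraticFun_add_smul_one hφx hε] with y hy hle
    rw [quadraticFun_self]
    linarith
  have hMA := hsub _ (contDiff_quadraticFun ..).contDiffOn (convexOn_quadraticFun _ _ _ hA hu.1) x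
    hx (htouch.on Ω)
  rw [hessianM_quadraticFun _ _ hA.1] at hMA
  exact (bellman_nonpos_iff hA.1 (hf0 x hx)).mpr ⟨hA, hMA⟩

lemma isMongeAmpereSupersolution_of_isBellmanSupersolution (hΩo : IsOpen Ω)
    (hf0 : ∀ x ∈ Ω, 0 ≤ f x) (hsup : IsBellmanSupersolution Ω f u) :
    IsMongeAmpereSupersolution Ω f u := by
  intro φ hφ hconv x hx hmin
  by_contra! hneg
  have hφx : ContDiffAt ℝ 2 φ x := hφ.contDiffAt (hΩo.mem_nhds hx)
  have hpsd : (hessianM d φ x).PosSemidef :=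
    posSemidef_hessianM_of_isLocalMax_sub hconv (hΩo.mem_nhds hx) hφx
      (by simpa only [sub_self] using isLocalMax_const)
  have hdet : 0 < (hessianM d φ x).det := by
    have hf : 0 ≤ (f x / d) ^ d := pow_nonneg (div_nonneg (hf0 x hx) d.cast_nonneg) d
    rw [MAop] at hneg
    linarith
  have hpd : (hessianM d φ x).PosDef := hpsd.posDef_iff_det_ne_zero.mpr hdet.ne'
  exact ((bellman_neg_iff hpd.1 (hf0 x hx)).mpr ⟨hpd, hneg⟩).not_ge (hsup φ hφ x hx hmin)

lemma isBellmanSupersolution_of_isMongeAmpereSupersolution (hΩo : IsOpen Ω) (hΩc : Convex ℝ Ω)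
    (hf0 : ∀ x ∈ Ω, 0 ≤ f x) (hsup : IsMongeAmpereSupersolution Ω f u) :
    IsBellmanSupersolution Ω f u := by
  intro φ hφ x hx hminOn
  by_contra! hneg
  have hφx : ContDiffAt ℝ 2 φ x := hφ.contDiffAt (hΩo.mem_nhds hx)
  have hmin : IsLocalMin (fun y => u y - φ y) x := hminOn.isLocalMin (hΩo.mem_nhds hx)
  obtain ⟨ε, hε, hlt⟩ := exists_between (neg_pos.mpr hneg)
  set A := hessianM d φ x + (-ε) • 1
  have hherm : A.IsHermitian :=
    (isHermitian_hessianM hφx).add (Matrix.isHermitian_one.smul (IsSelfAdjoint.all _))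
  have hbellman : bellman d A (f x) < 0 := by
    rw [bellman_add_smul_one]
    linarith
  obtain ⟨hA, hMA⟩ := (bellman_neg_iff hherm (hf0 x hx)).mp hbellman
  have htouch :
      IsLocalMin (fun y => u y - quadraticFun (φ x) (fderiv ℝ φ x) A x y) x := by
    filter_upwards [hmin, eventually_quadraticFun_sub_smul_one_le hφx hε] with y hy hle
    rw [quadraticFun_self]
    linarith
  have hMA_nonneg := hsup _ (contDiff_quadraticFun ..).contDiffOn
    (convexOn_quadraticFun _ _ _ hA.posSemidef hΩc) x hx (htouch.on Ω)
  rw [hessianM_quadraticFun _ _ hherm] at hMA_nonneg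
  exact hMA.not_ge hMA_nonneg

theorem stmt_17_general (hΩo : IsOpen Ω) (hΩc : Convex ℝ Ω) (hf0 : ∀ x ∈ Ω, 0 ≤ f x) :
    (UpperSemicontinuousOn u Ω ∧ IsBellmanSubsolution Ω f u ∧
      LowerSemicontinuousOn u Ω ∧ IsBellmanSupersolution Ω f u) ↔
    (ConvexOn ℝ Ω u ∧ IsMongeAmpereSubsolution Ω f u ∧ IsMongeAmpereSupersolution Ω f u) := by
  constructor
  · rintro ⟨husc, hsub, -, hsup⟩
    exact ⟨convexOn_of_isBellmanSubsolution hΩo hΩc hf0 husc hsub,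
      isMongeAmpereSubsolution_of_isBellmanSubsolution hΩo hf0 hsub,
      isMongeAmpereSupersolution_of_isBellmanSupersolution hΩo hf0 hsup⟩
  · rintro ⟨hconv, hsub, hsup⟩
    have hcont : ContinuousOn u Ω := hconv.continuousOn hΩo
    exact ⟨hcont.upperSemicontinuousOn,
      isBellmanSubsolution_of_isMongeAmpereSubsolution hΩo hf0 hconv hsub,
      hcont.lowerSemicontinuousOn,
      isBellmanSupersolution_of_isMongeAmpereSupersolution hΩo hΩc hf0 hsup⟩

end ViscositySolutions

/-- u is a viscosity solution of the Bellman equation iff u is convex and a viscosity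
solution of the Monge–Ampère equation on the set of convex functions. -/
theorem stmt_17 (d : ℕ) (hd : 2 ≤ d) (Ω : Set (Fin d → ℝ)) (hΩo : IsOpen Ω)
    (hΩb : Bornology.IsBounded Ω) (hΩc : Convex ℝ Ω)
    (f : (Fin d → ℝ) → ℝ) (hfc : ContinuousOn f Ω) (hf0 : ∀ x ∈ Ω, 0 ≤ f x)
    (u : (Fin d → ℝ) → ℝ) :
    (UpperSemicontinuousOn u Ω ∧
      (∀ φ : (Fin d → ℝ) → ℝ, ContDiffOn ℝ 2 φ Ω →
        ∀ x ∈ Ω, IsLocalMaxOn (fun y => u y - φ y) Ω x →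
          bellman d (hessianM d φ x) (f x) ≤ 0) ∧
     LowerSemicontinuousOn u Ω ∧
      (∀ φ : (Fin d → ℝ) → ℝ, ContDiffOn ℝ 2 φ Ω →
        ∀ x ∈ Ω, IsLocalMinOn (fun y => u y - φ y) Ω x →
          0 ≤ bellman d (hessianM d φ x) (f x)))
    ↔
    (ConvexOn ℝ Ω u ∧
      (∀ φ : (Fin d → ℝ) → ℝ, ContDiffOn ℝ 2 φ Ω → ConvexOn ℝ Ω φ →
        ∀ x ∈ Ω, IsLocalMaxOn (fun y => u y - φ y) Ω x →
          MAop d (hessianM d φ x) (f x) ≤ 0) ∧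
      (∀ φ : (Fin d → ℝ) → ℝ, ContDiffOn ℝ 2 φ Ω → ConvexOn ℝ Ω φ →
        ∀ x ∈ Ω, IsLocalMinOn (fun y => u y - φ y) Ω x →
          0 ≤ MAop d (hessianM d φ x) (f x))) := by
  have : NeZero d := ⟨by omega⟩
  exact stmt_17_general hΩo hΩc hf0
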